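/- Let β ∈ [0, 1/2]. In ℂ⁴ with standard orthonormal basis m₀, m₁, m₂, m₃ define the unit vectors E01 = (√(1−(3/2)β)·m₀ + √(β/2)·m₃)/√(1−β), E10 = (√(1−(3/2)β)·m₀ − √(β/2)·m₃)/√(1−β), E00 = (m₁ − i·m₂)/√2, E11 = (m₁ + i·m₂)/√2, and the density matrices σ₀ = (1−β)|E01⟩⟨E01| + β|E00⟩⟨E00| and σ₁ = (1−β)|E10⟩⟨E10| + β|E11⟩⟨E11|. Then the supremum over all binary POVMs (M₀, M₁) on ℂ⁴ of ½(tr(M₀σ₀) + tr(M₁σ₁)) equals ½·(1 + β + √2·√(β(1−(3/2)β))). -/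

import Mathlib

open Matrix ComplexOrder

/-- Rank-one outer product `|v⟩⟨v|`. -/
noncomputable def outerProd (v : Fin 4 → ℂ) : Matrix (Fin 4) (Fin 4) ℂ :=
  Matrix.of fun i j => v i * (starRingEnd ℂ) (v j)

noncomputable def E01v (β : ℝ) : Fin 4 → ℂ :=
  ![((Real.sqrt (1 - 3/2*β) / Real.sqrt (1 - β) : ℝ) : ℂ), 0, 0,
    ((Real.sqrt (β/2) / Real.sqrt (1 - β) : ℝ) : ℂ)]

noncomputable def E10v (β : ℝ) : Fin 4 → ℂ :=
  ![((Real.sqrt (1 - 3/2*β) / Real.sqrt (1 - β) : ℝ) : ℂ), 0, 0,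
    ((-(Real.sqrt (β/2) / Real.sqrt (1 - β)) : ℝ) : ℂ)]

noncomputable def E00v : Fin 4 → ℂ :=
  ![0, (Real.sqrt 2 : ℂ)⁻¹, -Complex.I * (Real.sqrt 2 : ℂ)⁻¹, 0]

noncomputable def E11v : Fin 4 → ℂ :=
  ![0, (Real.sqrt 2 : ℂ)⁻¹, Complex.I * (Real.sqrt 2 : ℂ)⁻¹, 0]

/-- Eve's ancilla state conditioned on Alice's bit `X = 0`. -/
noncomputable def sigma0 (β : ℝ) : Matrix (Fin 4) (Fin 4) ℂ :=
  ((1 - β : ℝ) : ℂ) • outerProd (E01v β) + ((β : ℝ) : ℂ) • outerProd E00v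

/-- Eve's ancilla state conditioned on Alice's bit `X = 1`. -/
noncomputable def sigma1 (β : ℝ) : Matrix (Fin 4) (Fin 4) ℂ :=
  ((1 - β : ℝ) : ℂ) • outerProd (E10v β) + ((β : ℝ) : ℂ) • outerProd E11v

/-!
For `M₀ + M₁ = 1` one has `2 (tr M₀A + tr M₁B) = tr (A + B) + tr (M₀ - M₁)(A - B)`. In an
orthonormal eigenbasis of `A - B`, with eigenvalues `λᵢ`, the diagonal entries of `M₀ - M₁` lie in
`[-1, 1]`, so the last trace is at most `∑ |λᵢ|`, and measuring the sign of `A - B` attains this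
bound (Helstrom's theorem). For Eve's states, `σ₀ - σ₁` acts on `span {m₀, m₃}` as `s` times the
swap of `m₀` and `m₃`, where `s = √2 √(β (1 - 3β/2))`, and on `span {m₁, m₂}` as `β` times
`|E00⟩⟨E00| - |E11⟩⟨E11|`; its eigenvalues are therefore `±s` and `±β`.
-/

section Helstrom

variable {n 𝕜 : Type*} [Fintype n] [DecidableEq n] [RCLike 𝕜]

/-- The set of probabilities with which the binary POVMs `(M₀, M₁)` guess a uniformly random bit
from a system in state `A` if the bit is `0` and in state `B` if it is `1`. It is defined for
arbitrary square matrices `A`, `B` by taking real parts of the traces. -/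
def guessingProbabilities (A B : Matrix n n 𝕜) : Set ℝ :=
  {g | ∃ M₀ M₁ : Matrix n n 𝕜, M₀.PosSemidef ∧ M₁.PosSemidef ∧ M₀ + M₁ = 1 ∧
    g = (RCLike.re (M₀ * A).trace + RCLike.re (M₁ * B).trace) / 2}

lemma two_mul_trace_mul_add_trace_mul {R : Type*} [NonAssocRing R] {M₀ M₁ : Matrix n n R}
    (hM : M₀ + M₁ = 1) (A B : Matrix n n R) :
    2 * ((M₀ * A).trace + (M₁ * B).trace) =
      (A + B).trace + ((M₀ - M₁) * (A - B)).trace := by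
  have hAB : A + B = (M₀ + M₁) * (A + B) := by rw [hM, Matrix.one_mul]
  rw [hAB]
  simp only [Matrix.add_mul, Matrix.mul_add, Matrix.sub_mul, Matrix.mul_sub, trace_add, trace_sub,
    two_mul]
  abel

lemma trace_mul_mul_diagonal_mul {R : Type*} [CommSemiring R] (M U V : Matrix n n R) (d : n → R) :
    (M * (U * diagonal d * V)).trace = ∑ i, (V * M * U) i i * d i := by
  calc (M * (U * diagonal d * V)).trace
      = (V * M * U * diagonal d).trace := by
        rw [← Matrix.mul_assoc, trace_mul_comm]
        simp only [Matrix.mul_assoc]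
    _ = ∑ i, (V * M * U) i i * d i := by simp only [trace, diag_apply, mul_diagonal]

lemma re_trace_sub_mul_le_sum_abs {M₀ M₁ U : Matrix n n 𝕜} (hM₀ : M₀.PosSemidef)
    (hM₁ : M₁.PosSemidef) (hM : M₀ + M₁ = 1) (hU : U ∈ unitaryGroup n 𝕜) (d : n → ℝ) :
    RCLike.re ((M₀ - M₁) * (U * diagonal (fun i => (d i : 𝕜)) * Uᴴ)).trace ≤ ∑ i, |d i| := by
  rw [trace_mul_mul_diagonal_mul, map_sum]
  refine Finset.sum_le_sum fun i _ => ?_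
  have h₀ : 0 ≤ RCLike.re ((Uᴴ * M₀ * U) i i) :=
    (RCLike.nonneg_iff.1 (hM₀.conjTranspose_mul_mul_same U).diag_nonneg).1
  have h₁ : 0 ≤ RCLike.re ((Uᴴ * M₁ * U) i i) :=
    (RCLike.nonneg_iff.1 (hM₁.conjTranspose_mul_mul_same U).diag_nonneg).1
  have hsum : RCLike.re ((Uᴴ * M₀ * U) i i) + RCLike.re ((Uᴴ * M₁ * U) i i) = 1 := by
    rw [← map_add, ← Matrix.add_apply, ← Matrix.add_mul, ← Matrix.mul_add, hM, Matrix.mul_one,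
      ← star_eq_conjTranspose, mem_unitaryGroup_iff'.1 hU, one_apply_eq, RCLike.one_re]
  have hdiff : |RCLike.re ((Uᴴ * M₀ * U) i i) - RCLike.re ((Uᴴ * M₁ * U) i i)| ≤ 1 :=
    abs_le.2 ⟨by linarith, by linarith⟩
  calc RCLike.re ((Uᴴ * (M₀ - M₁) * U) i i * (d i : 𝕜))
      = (RCLike.re ((Uᴴ * M₀ * U) i i) - RCLike.re ((Uᴴ * M₁ * U) i i)) * d i := by
        rw [RCLike.re_mul_ofReal, Matrix.mul_sub, Matrix.sub_mul, Matrix.sub_apply, map_sub]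
    _ ≤ |RCLike.re ((Uᴴ * M₀ * U) i i) - RCLike.re ((Uᴴ * M₁ * U) i i)| * |d i| := by
        rw [← abs_mul]
        exact le_abs_self _
    _ ≤ |d i| := mul_le_of_le_one_left (abs_nonneg _) hdiff

lemma exists_posSemidef_re_trace_sub_mul_eq_sum_abs {U : Matrix n n 𝕜}
    (hU : U ∈ unitaryGroup n 𝕜) (d : n → ℝ) :
    ∃ M₀ M₁ : Matrix n n 𝕜, M₀.PosSemidef ∧ M₁.PosSemidef ∧ M₀ + M₁ = 1 ∧
      RCLike.re ((M₀ - M₁) * (U * diagonal (fun i => (d i : 𝕜)) * Uᴴ)).trace = ∑ i, |d i| := by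
  let p : n → 𝕜 := fun i => if 0 ≤ d i then 1 else 0
  let q : n → 𝕜 := fun i => if 0 ≤ d i then 0 else 1
  have hp : 0 ≤ p := fun i => by dsimp only [p]; split_ifs <;> simp
  have hq : 0 ≤ q := fun i => by dsimp only [q]; split_ifs <;> simp
  have hUU : Uᴴ * U = 1 := mem_unitaryGroup_iff'.1 hU
  refine ⟨U * diagonal p * Uᴴ, U * diagonal q * Uᴴ,
    (PosSemidef.diagonal hp).mul_mul_conjTranspose_same U,
    (PosSemidef.diagonal hq).mul_mul_conjTranspose_same U, ?_, ?_⟩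
  · have hpq : (fun i => p i + q i) = fun _ => 1 := by
      funext i; dsimp only [p, q]; split_ifs <;> simp
    rw [← Matrix.add_mul, ← Matrix.mul_add, diagonal_add, hpq, diagonal_one, Matrix.mul_one]
    exact mem_unitaryGroup_iff.1 hU
  · have hconj : Uᴴ * (U * diagonal p * Uᴴ - U * diagonal q * Uᴴ) * U =
        diagonal fun i => p i - q i := by
      calc Uᴴ * (U * diagonal p * Uᴴ - U * diagonal q * Uᴴ) * U
          = (Uᴴ * U) * (diagonal p - diagonal q) * (Uᴴ * U) := by noncomm_ring
        _ = diagonal fun i => p i - q i := by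
            rw [hUU, Matrix.one_mul, Matrix.mul_one, diagonal_sub]
    rw [trace_mul_mul_diagonal_mul, hconj, map_sum]
    refine Finset.sum_congr rfl fun i _ => ?_
    rw [diagonal_apply_eq, RCLike.re_mul_ofReal]
    dsimp only [p, q]
    split_ifs with h
    · simp [abs_of_nonneg h]
    · simp [abs_of_neg (not_le.1 h)]

theorem isGreatest_guessingProbabilities {A B U : Matrix n n 𝕜} {d : n → ℝ}
    (hU : U ∈ unitaryGroup n 𝕜)
    (hAB : A - B = U * diagonal (fun i => (d i : 𝕜)) * Uᴴ) :
    IsGreatest (guessingProbabilities A B) ((RCLike.re (A + B).trace + ∑ i, |d i|) / 4) := by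
  have hguess {M₀ M₁ : Matrix n n 𝕜} (hM : M₀ + M₁ = 1) :
      2 * (RCLike.re (M₀ * A).trace + RCLike.re (M₁ * B).trace) = RCLike.re (A + B).trace +
        RCLike.re ((M₀ - M₁) * (U * diagonal (fun i => (d i : 𝕜)) * Uᴴ)).trace := by
    rw [← hAB, ← map_add RCLike.re (A + B).trace, ← two_mul_trace_mul_add_trace_mul hM]
    simp only [two_mul, map_add]
  constructor
  · obtain ⟨M₀, M₁, hM₀, hM₁, hM, hopt⟩ := exists_posSemidef_re_trace_sub_mul_eq_sum_abs hU d
    exact ⟨M₀, M₁, hM₀, hM₁, hM, by linarith [hguess hM]⟩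
  · rintro _ ⟨M₀, M₁, hM₀, hM₁, hM, rfl⟩
    linarith [hguess hM, re_trace_sub_mul_le_sum_abs hM₀ hM₁ hM hU d]

end Helstrom

section EveStates

lemma ofReal_inv_sqrt_two_mul_self : (√2 : ℂ)⁻¹ * (√2 : ℂ)⁻¹ = 2⁻¹ := by
  rw [← mul_inv, ← Complex.ofReal_mul, Real.mul_self_sqrt zero_le_two, Complex.ofReal_ofNat]

lemma trace_outerProd (v : Fin 4 → ℂ) : (outerProd v).trace = ((∑ i, ‖v i‖ ^ 2 : ℝ) : ℂ) := by
  simp only [Complex.ofReal_sum, Complex.ofReal_pow, trace, diag_apply, outerProd, of_apply,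
    RCLike.mul_conj, Complex.coe_algebraMap]

lemma outerProd_sub_outerProd_neg_last (a b : ℝ) :
    outerProd ![(a : ℂ), 0, 0, (b : ℂ)] - outerProd ![(a : ℂ), 0, 0, ((-b : ℝ) : ℂ)] =
      ((2 * (a * b) : ℝ) : ℂ) • !![0, 0, 0, 1; 0, 0, 0, 0; 0, 0, 0, 0; 1, 0, 0, 0] := by
  ext i j
  fin_cases i <;> fin_cases j <;> simp [outerProd] <;> ring

lemma outerProd_E00v_sub_outerProd_E11v :
    outerProd E00v - outerProd E11v =
      !![0, 0, 0, 0; 0, 0, Complex.I, 0; 0, -Complex.I, 0, 0; 0, 0, 0, 0] := by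
  have h := ofReal_inv_sqrt_two_mul_self
  ext i j
  fin_cases i <;> fin_cases j <;> simp [outerProd, E00v, E11v]
  · linear_combination 2 * Complex.I * h
  · linear_combination -2 * Complex.I * h

variable {β : ℝ}

lemma sq_sqrt_div_sqrt_add_sq_sqrt_div_sqrt (hβ : β ∈ Set.Icc (0 : ℝ) (2 / 3)) :
    (√(1 - 3 / 2 * β) / √(1 - β)) ^ 2 + (√(β / 2) / √(1 - β)) ^ 2 = 1 := by
  obtain ⟨h₀, h₁⟩ := hβ
  have hne : 1 - β ≠ 0 := by linarith
  rw [div_pow, div_pow, Real.sq_sqrt (by linarith), Real.sq_sqrt (by linarith),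
    Real.sq_sqrt (by linarith)]
  field_simp
  ring

lemma trace_sigma0 (hβ : β ∈ Set.Icc (0 : ℝ) (2 / 3)) : (sigma0 β).trace = 1 := by
  have hE01 : (outerProd (E01v β)).trace = 1 := by
    rw [trace_outerProd, ← Complex.ofReal_one, ← sq_sqrt_div_sqrt_add_sq_sqrt_div_sqrt hβ]
    congr 1
    simp only [E01v, Fin.sum_univ_four, cons_val, Complex.norm_real, Real.norm_eq_abs, sq_abs,
      norm_zero, zero_pow two_ne_zero, add_zero]
  have hE00 : (outerProd E00v).trace = 1 := by
    rw [trace_outerProd, E00v]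
    simp only [Fin.sum_univ_four, cons_val]
    norm_num
  rw [sigma0, trace_add, trace_smul, trace_smul, hE01, hE00]
  simp

lemma trace_sigma1 (hβ : β ∈ Set.Icc (0 : ℝ) (2 / 3)) : (sigma1 β).trace = 1 := by
  have hE10 : (outerProd (E10v β)).trace = 1 := by
    rw [trace_outerProd, ← Complex.ofReal_one, ← sq_sqrt_div_sqrt_add_sq_sqrt_div_sqrt hβ]
    congr 1
    simp only [E10v, Fin.sum_univ_four, cons_val, Complex.norm_real, Real.norm_eq_abs, sq_abs,
      norm_zero, zero_pow two_ne_zero, neg_sq, add_zero]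
  have hE11 : (outerProd E11v).trace = 1 := by
    rw [trace_outerProd, E11v]
    simp only [Fin.sum_univ_four, cons_val]
    norm_num
  rw [sigma1, trace_add, trace_smul, trace_smul, hE10, hE11]
  simp

lemma one_sub_mul_two_mul_sqrt_div_mul_sqrt_div (hβ : β ≤ 2 / 3) :
    (1 - β) * (2 * (√(1 - 3 / 2 * β) / √(1 - β) * (√(β / 2) / √(1 - β)))) =
      √2 * √(β * (1 - 3 / 2 * β)) := by
  have hne : 1 - β ≠ 0 := by linarith
  calc (1 - β) * (2 * (√(1 - 3 / 2 * β) / √(1 - β) * (√(β / 2) / √(1 - β))))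
      = 2 * (√(1 - 3 / 2 * β) * √(β / 2)) := by
        rw [div_mul_div_comm, Real.mul_self_sqrt (by linarith)]
        field_simp
    _ = √(2 ^ 2 * ((1 - 3 / 2 * β) * (β / 2))) := by
        rw [Real.sqrt_mul (by norm_num), Real.sqrt_sq zero_le_two, Real.sqrt_mul (by linarith)]
    _ = √2 * √(β * (1 - 3 / 2 * β)) := by
        rw [← Real.sqrt_mul zero_le_two]
        ring_nf

/-- An orthonormal eigenbasis of `σ₀ - σ₁`, as a matrix with columns `(m₀ + m₃)/√2`, `E00`, `E11`,
`(m₀ - m₃)/√2`. It does not depend on the error rate. -/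
noncomputable def diffEigenbasis : Matrix (Fin 4) (Fin 4) ℂ :=
  (√2 : ℂ)⁻¹ • !![1, 0, 0, 1; 0, 1, 1, 0; 0, -Complex.I, Complex.I, 0; 1, 0, 0, -1]

/-- The eigenvalues of `σ₀ - σ₁` at error rate `β`, in the order of the columns of
`diffEigenbasis`. -/
noncomputable def diffEigenvalues (β : ℝ) : Fin 4 → ℝ :=
  ![√2 * √(β * (1 - 3 / 2 * β)), β, -β, -(√2 * √(β * (1 - 3 / 2 * β)))]

lemma diffEigenbasis_mem_unitaryGroup : diffEigenbasis ∈ unitaryGroup (Fin 4) ℂ := by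
  rw [mem_unitaryGroup_iff, star_eq_conjTranspose, diffEigenbasis, conjTranspose_smul,
    smul_mul_smul, star_inv₀, Complex.star_def, Complex.conj_ofReal, ofReal_inv_sqrt_two_mul_self]
  ext i j
  rw [Matrix.smul_apply, Matrix.mul_apply]
  simp only [Fin.sum_univ_four, conjTranspose_apply]
  fin_cases i <;> fin_cases j <;> simp <;> norm_num

lemma sigma0_sub_sigma1 (hβ : β ≤ 2 / 3) :
    sigma0 β - sigma1 β =
      ((√2 * √(β * (1 - 3 / 2 * β)) : ℝ) : ℂ) •
          !![0, 0, 0, 1; 0, 0, 0, 0; 0, 0, 0, 0; 1, 0, 0, 0] +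
        (β : ℂ) • !![0, 0, 0, 0; 0, 0, Complex.I, 0; 0, -Complex.I, 0, 0; 0, 0, 0, 0] := by
  rw [sigma0, sigma1, add_sub_add_comm, ← smul_sub, ← smul_sub, outerProd_E00v_sub_outerProd_E11v,
    E01v, E10v, outerProd_sub_outerProd_neg_last, smul_smul, ← Complex.ofReal_mul,
    one_sub_mul_two_mul_sqrt_div_mul_sqrt_div hβ]

lemma sigma0_sub_sigma1_eq_conj_diagonal (hβ : β ≤ 2 / 3) :
    sigma0 β - sigma1 β =
      diffEigenbasis * diagonal (fun i => (diffEigenvalues β i : ℂ)) * diffEigenbasisᴴ := by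
  rw [sigma0_sub_sigma1 hβ, diffEigenbasis, conjTranspose_smul, smul_mul, smul_mul_smul,
    star_inv₀, Complex.star_def, Complex.conj_ofReal, ofReal_inv_sqrt_two_mul_self]
  ext i j
  rw [Matrix.smul_apply, Matrix.mul_apply]
  simp only [Fin.sum_univ_four, conjTranspose_apply, mul_diagonal, diffEigenvalues]
  fin_cases i <;> fin_cases j <;> simp <;> ring

lemma sum_abs_diffEigenvalues (hβ : 0 ≤ β) :
    ∑ i, |diffEigenvalues β i| = 2 * (β + √2 * √(β * (1 - 3 / 2 * β))) := by
  simp only [diffEigenvalues, Fin.sum_univ_four, cons_val, abs_neg, abs_of_nonneg hβ,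
    abs_of_nonneg (show 0 ≤ √2 * √(β * (1 - 3 / 2 * β)) by positivity)]
  ring

end EveStates

theorem stmt14_general (β : ℝ) (hβ : β ∈ Set.Icc (0 : ℝ) (2 / 3)) :
    IsGreatest (guessingProbabilities (sigma0 β) (sigma1 β))
      ((1 + β + √2 * √(β * (1 - 3 / 2 * β))) / 2) := by
  have hmax := isGreatest_guessingProbabilities (d := diffEigenvalues β)
    diffEigenbasis_mem_unitaryGroup (sigma0_sub_sigma1_eq_conj_diagonal hβ.2)
  rw [sum_abs_diffEigenvalues hβ.1, trace_add, trace_sigma0 hβ, trace_sigma1 hβ, map_add,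
    RCLike.one_re] at hmax
  convert hmax using 1
  ring

/-- **Attack M2 (QKD), min-entropy.** The optimal probability of guessing the
uniformly random bit `X` from Eve's ancilla equals
`(1 + β + √2·√(β(1-(3/2)β)))/2`. -/
theorem stmt14 (β : ℝ) (hβ : β ∈ Set.Icc (0:ℝ) (1/2)) :
    sSup {g : ℝ | ∃ M₀ M₁ : Matrix (Fin 4) (Fin 4) ℂ,
        M₀.PosSemidef ∧ M₁.PosSemidef ∧ M₀ + M₁ = 1 ∧
        g = ((M₀ * sigma0 β).trace.re + (M₁ * sigma1 β).trace.re) / 2} =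
      (1 + β + Real.sqrt 2 * Real.sqrt (β * (1 - 3/2*β))) / 2 :=
  (stmt14_general β ⟨hβ.1, hβ.2.trans (by norm_num)⟩).csSup_eq
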